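/- arXiv:2111.07061 — 3 statements merged into one kernel-verified Lean document; each statement's English description precedes it below -/
import Mathlib

section
/- Let k_P, k_I, k_D be strictly positive real numbers, let K be a real number with 0 < K < 2, set δ = K − 1 and σ = 2 K k_I, and suppose k_D³ > k_I/(1 − δ²) and k_P > 2 K k_D². Then the symmetric matrix Q = [[2(k_P k_I/k_D² − σ), 0, 0], [0, 2(k_D − k_I/k_D²), 2k_I − σ], [0, 2k_I − σ, 2k_I²/k_D]] is positive definite. -/
/-!
`Q` is block diagonal, with a `1 × 1` and a `2 × 2` block. The first is positive exactly when
`2 * K * kD ^ 2 < kP`. In the second the lower diagonal entry is positive, so only the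
determinant `4 * kI ^ 2 / kD ^ 3 * (kD ^ 3 * (1 - δ ^ 2) - kI)` matters; the factor `1 - δ ^ 2`
arises as `1 - (1 - K) ^ 2`, the off-diagonal entry being `2 * kI * (1 - K)`.
-/

open Matrix

section Blocks

variable {m n R : Type*} [Ring R] [PartialOrder R] [StarRing R]

lemma posDef_submatrix_equiv_iff {M : Matrix n n R} (e : m ≃ n) :
    (M.submatrix e e).PosDef ↔ M.PosDef :=
  ⟨fun h => by simpa using h.submatrix e.symm.injective, fun h => h.submatrix e.injective⟩

lemma posDef_fromBlocks_zero_iff [AddLeftMono R] [Finite m] [Finite n]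
    {A : Matrix m m R} {D : Matrix n n R} :
    (fromBlocks A 0 0 D).PosDef ↔ A.PosDef ∧ D.PosDef := by
  cases nonempty_fintype m
  cases nonempty_fintype n
  constructor
  · intro h
    exact ⟨h.submatrix Sum.inl_injective, h.submatrix Sum.inr_injective⟩
  · rintro ⟨hA, hD⟩
    refine .of_dotProduct_mulVec_pos (hA.isHermitian.fromBlocks (by simp) hD.isHermitian) ?_
    intro x hx
    obtain ⟨u, v, rfl⟩ : ∃ u v, x = Sum.elim u v := ⟨_, _, (Sum.elim_comp_inl_inr x).symm⟩
    have form_eq : star (Sum.elim u v) ⬝ᵥ (fromBlocks A 0 0 D *ᵥ Sum.elim u v) =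
        star u ⬝ᵥ (A *ᵥ u) + star v ⬝ᵥ (D *ᵥ v) := by
      simp [fromBlocks_mulVec, Function.star_sumElim]
    rw [form_eq]
    by_cases hu : u = 0
    · have hv : v ≠ 0 := by
        rintro rfl
        exact hx (by simp [hu])
      exact add_pos_of_nonneg_of_pos (hA.posSemidef.dotProduct_mulVec_nonneg u)
        (hD.dotProduct_mulVec_pos hv)
    · exact add_pos_of_pos_of_nonneg (hA.dotProduct_mulVec_pos hu)
        (hD.posSemidef.dotProduct_mulVec_nonneg v)

end Blocks

section SmallMatrices

variable {R : Type*} [CommRing R] [StarRing R] [TrivialStar R]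

lemma mul_dotProduct_mulVec_fin_two (a b c : R) (x : Fin 2 → R) :
    c * (star x ⬝ᵥ (!![a, b; b, c] *ᵥ x)) =
      (a * c - b ^ 2) * x 0 ^ 2 + (b * x 0 + c * x 1) ^ 2 := by
  simp only [dotProduct, Pi.star_apply, star_trivial, mulVec, of_apply, cons_val',
    cons_val_fin_one, Fin.sum_univ_two, cons_val_zero, cons_val_one]
  ring

variable [LinearOrder R] [IsStrictOrderedRing R]

lemma posDef_fin_one_iff {a : R} : !![a].PosDef ↔ 0 < a := by
  refine ⟨fun h => h.diag_pos (i := 0), fun ha => .of_dotProduct_mulVec_pos ?_ fun x hx => ?_⟩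
  · ext i j
    simp
  · have h0 : x 0 ≠ 0 := fun h0 => hx (funext fun i => by rwa [Subsingleton.elim i 0])
    have form_eq : star x ⬝ᵥ (!![a] *ᵥ x) = a * x 0 ^ 2 := by
      simp only [dotProduct, Finset.univ_unique, Fin.default_eq_zero, Pi.star_apply, star_trivial,
        mulVec, of_apply, cons_val', cons_val_fin_one, Finset.sum_singleton]
      ring
    rw [form_eq]
    positivity

lemma posDef_fin_two_iff {a b c : R} : !![a, b; b, c].PosDef ↔ 0 < c ∧ b ^ 2 < a * c := by
  constructor
  · intro h
    have hc : 0 < c := h.diag_pos (i := 1)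
    -- `![c, -b]` makes the square `(b * x 0 + c * x 1) ^ 2` vanish.
    have form_pos := h.dotProduct_mulVec_pos (x := ![c, -b]) fun h0 => hc.ne' (congrFun h0 0)
    have form_at : c * (star ![c, -b] ⬝ᵥ (!![a, b; b, c] *ᵥ ![c, -b])) =
        (a * c - b ^ 2) * c ^ 2 := by
      rw [mul_dotProduct_mulVec_fin_two, cons_val_zero, cons_val_one, cons_val_fin_one]
      ring
    exact ⟨hc, sub_pos.1 (pos_of_mul_pos_left (form_at ▸ mul_pos hc form_pos) (sq_nonneg c))⟩
  · rintro ⟨hc, hdet⟩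
    refine .of_dotProduct_mulVec_pos ?_ fun x hx => ?_
    · ext i j
      fin_cases i <;> fin_cases j <;> simp
    refine pos_of_mul_pos_right ?_ hc.le
    rw [mul_dotProduct_mulVec_fin_two]
    rw [← sub_pos] at hdet
    by_cases h0 : x 0 = 0
    · have h1 : x 1 ≠ 0 := fun h1 => hx (funext (Fin.forall_fin_two.2 ⟨h0, h1⟩))
      have : 0 < (c * x 1) ^ 2 := by positivity
      simpa [h0] using this
    · positivity

lemma posDef_fin_three_iff_of_block {a b c d : R} :
    !![a, 0, 0; 0, b, d; 0, d, c].PosDef ↔ 0 < a ∧ 0 < c ∧ d ^ 2 < b * c := by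
  have block_form : !![a, 0, 0; 0, b, d; 0, d, c].submatrix finSumFinEquiv finSumFinEquiv =
      fromBlocks !![a] 0 0 !![b, d; d, c] := by
    ext (i | i) (j | j) <;> fin_cases i <;> fin_cases j <;> rfl
  rw [← posDef_submatrix_equiv_iff (finSumFinEquiv (m := 1) (n := 2)), block_form,
    posDef_fromBlocks_zero_iff, posDef_fin_one_iff, posDef_fin_two_iff]

end SmallMatrices

section Gains

variable {𝕜 : Type*} [Field 𝕜] [LinearOrder 𝕜] [IsStrictOrderedRing 𝕜] {kP kI kD K : 𝕜}

lemma proportional_entry_pos_iff (hkI : 0 < kI) (hkD : 0 < kD) :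
    0 < 2 * (kP * kI / kD ^ 2 - 2 * K * kI) ↔ 2 * K * kD ^ 2 < kP := by
  have entry_eq : 2 * (kP * kI / kD ^ 2 - 2 * K * kI) =
      2 * kI / kD ^ 2 * (kP - 2 * K * kD ^ 2) := by
    field_simp
  rw [entry_eq, mul_pos_iff_of_pos_left (by positivity), sub_pos]

lemma coupling_sq_lt_mul_diag_entries_iff (hkI : kI ≠ 0) (hkD : 0 < kD) :
    (2 * kI - 2 * K * kI) ^ 2 < 2 * (kD - kI / kD ^ 2) * (2 * kI ^ 2 / kD) ↔
      kI < kD ^ 3 * (1 - (K - 1) ^ 2) := by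
  have det_eq : 2 * (kD - kI / kD ^ 2) * (2 * kI ^ 2 / kD) - (2 * kI - 2 * K * kI) ^ 2 =
      4 * kI ^ 2 / kD ^ 3 * (kD ^ 3 * (1 - (K - 1) ^ 2) - kI) := by
    field_simp
    ring
  rw [← sub_pos, det_eq, mul_pos_iff_of_pos_left (by positivity), sub_pos]

theorem stmt_4_general [StarRing 𝕜] [TrivialStar 𝕜] (hkI : 0 < kI) (hkD : 0 < kD)
    (hK0 : 0 < K) (hK2 : K < 2) {δ σ : 𝕜} (hδ : δ = K - 1) (hσ : σ = 2 * K * kI) :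
    !![2 * (kP * kI / kD ^ 2 - σ), 0, 0;
        0, 2 * (kD - kI / kD ^ 2), 2 * kI - σ;
        0, 2 * kI - σ, 2 * kI ^ 2 / kD].PosDef ↔
      kI / (1 - δ ^ 2) < kD ^ 3 ∧ 2 * K * kD ^ 2 < kP := by
  subst hδ hσ
  have one_sub_sq_pos : 0 < 1 - (K - 1) ^ 2 := by nlinarith
  have corner_pos : 0 < 2 * kI ^ 2 / kD := by positivity
  rw [posDef_fin_three_iff_of_block, proportional_entry_pos_iff hkI hkD,
    coupling_sq_lt_mul_diag_entries_iff hkI.ne' hkD, div_lt_iff₀ one_sub_sq_pos,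
    and_iff_right corner_pos, and_comm]

end Gains

theorem stmt_4 (kP kI kD K : ℝ) (hkP : 0 < kP) (hkI : 0 < kI) (hkD : 0 < kD)
    (hK0 : 0 < K) (hK2 : K < 2) (δ σ : ℝ) (hδ : δ = K - 1) (hσ : σ = 2 * K * kI)
    (hD : kD ^ 3 > kI / (1 - δ ^ 2)) (hP : kP > 2 * K * kD ^ 2) :
    (!![2 * (kP * kI / kD ^ 2 - σ), 0, 0;
        0, 2 * (kD - kI / kD ^ 2), 2 * kI - σ;
        0, 2 * kI - σ, 2 * kI ^ 2 / kD] : Matrix (Fin 3) (Fin 3) ℝ).PosDef :=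
  (stmt_4_general hkI hkD hK0 hK2 hδ hσ).2 ⟨hD, hP⟩
end

section
/- Let n ≥ 1 and let k_P, k_D, k_I, α, β, γ, σ be real numbers such that both the matrix P = [[k_P, α, σ], [α, 1, β], [σ, β, γ]] and the matrix Q = [[2(k_P α − σ), k_D α − β, k_I α + k_P β − γ], [k_D α − β, 2(k_D − α), k_I + β k_D − σ], [k_I α + k_P β − γ, k_I + β k_D − σ, 2 β k_I]] are positive definite. Then there exist constants C > 0 and λ > 0, depending only on the gains and these matrices, such that every solution e, z : ℝ → ℝⁿ of the closed-loop system ż(t) = e(t), ë(t) = −k_P e(t) − k_D ė(t) − k_I z(t) satisfies ‖e(t)‖ + ‖ė(t)‖ + ‖z(t)‖ ≤ C·(‖e(0)‖ + ‖ė(0)‖ + ‖z(0)‖)·exp(−λ t) for all t ≥ 0; in particular e(t), ė(t) and z(t) all tend to 0 as t → ∞. -/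
/-!
Collect the state as `x = (e, ė, z)`, so that the closed loop reads `ẋ = A x` with `A` acting on
triples of vectors. Then `2 W = ∑ P i j ⟪x i, x j⟫`, and `Q = -(Aᵀ P + P A)`, which makes the
closed loop an instance of Lyapunov's theorem for linear systems. A positive semidefinite matrix has
a nonnegative form on every inner product space, because its Hadamard product with a Gram matrix is
again positive semidefinite (Schur). Hence the matrix inequalities `a • 1 ≤ P`, `b • P ≤ 1` and
`μ • P ≤ Q`, whose constants depend on the matrices only, yield `Ẇ ≤ -μ W` and the equivalence of
`W` with the squared norm of the state. Grönwall's inequality gives exponential decay.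
-/

universe u

section Lyapunov

open Set Matrix Filter Topology
open scoped InnerProductSpace MatrixOrder

open scoped ComplexOrder in
theorem exists_pos_smul_le_of_posDef {𝕜 ι : Type*} [RCLike 𝕜] [Finite ι] [Nonempty ι]
    {M N : Matrix ι ι 𝕜} (hM : M.IsHermitian) (hN : N.PosDef) : ∃ c > (0 : ℝ), c • M ≤ N := by
  classical
  have := Fintype.ofFinite ι
  obtain ⟨r, hr, hrN⟩ : ∃ r > 0, algebraMap ℝ (Matrix ι ι 𝕜) r ≤ N :=
    (CFC.exists_pos_algebraMap_le_iff hN.isHermitian.isSelfAdjoint).mpr fun _ h =>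
      hN.isStrictlyPositive.spectrum_pos h
  obtain ⟨b, hb⟩ : BddAbove (spectrum ℝ M) := M.finite_real_spectrum.bddAbove
  have hMb : M ≤ algebraMap ℝ (Matrix ι ι 𝕜) (max b 1) :=
    (le_algebraMap_iff_spectrum_le hM.isSelfAdjoint).mpr fun x hx =>
      (hb hx).trans (le_max_left b 1)
  have hb_pos : 0 < max b 1 := lt_max_of_lt_right one_pos
  refine ⟨r / max b 1, div_pos hr hb_pos, le_trans ?_ hrN⟩
  calc (r / max b 1) • M
      ≤ (r / max b 1) • algebraMap ℝ (Matrix ι ι 𝕜) (max b 1) :=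
        smul_le_smul_of_nonneg_left hMb (div_pos hr hb_pos).le
    _ = algebraMap ℝ (Matrix ι ι 𝕜) r := by
        simp only [Algebra.algebraMap_eq_smul_one, smul_smul, div_mul_cancel₀ r hb_pos.ne']

variable {ι : Type*} [Fintype ι] {E : Type u} [NormedAddCommGroup E] [InnerProductSpace ℝ E]

/-- The quadratic form of the real matrix `M` evaluated on a family of vectors of an inner product
space. Lyapunov functions are of this shape; for `E = ℝ` it is the usual form `xᵀ M x`. -/
def gramForm (M : Matrix ι ι ℝ) (x : ι → E) : ℝ :=
  ∑ i, ∑ j, M i j * ⟪x i, x j⟫_ℝ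

theorem gramForm_nonneg {M : Matrix ι ι ℝ} (hM : M.PosSemidef) (x : ι → E) :
    0 ≤ gramForm M x := by
  have h := (hM.hadamard (posSemidef_gram ℝ x)).dotProduct_mulVec_nonneg 1
  simpa [gramForm, dotProduct, mulVec] using h

theorem gramForm_add (M N : Matrix ι ι ℝ) (x : ι → E) :
    gramForm (M + N) x = gramForm M x + gramForm N x := by
  simp only [gramForm, Matrix.add_apply, add_mul, Finset.sum_add_distrib]

theorem gramForm_sub (M N : Matrix ι ι ℝ) (x : ι → E) :
    gramForm (M - N) x = gramForm M x - gramForm N x := by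
  simp only [gramForm, Matrix.sub_apply, sub_mul, Finset.sum_sub_distrib]

theorem gramForm_neg (M : Matrix ι ι ℝ) (x : ι → E) : gramForm (-M) x = -gramForm M x := by
  simp only [gramForm, Matrix.neg_apply, neg_mul, Finset.sum_neg_distrib]

theorem gramForm_smul (c : ℝ) (M : Matrix ι ι ℝ) (x : ι → E) :
    gramForm (c • M) x = c * gramForm M x := by
  simp only [gramForm, Matrix.smul_apply, smul_eq_mul, mul_assoc, Finset.mul_sum]

theorem gramForm_one [DecidableEq ι] (x : ι → E) : gramForm 1 x = ∑ i, ‖x i‖ ^ 2 := by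
  simp [gramForm, one_apply]

theorem gramForm_mono {M N : Matrix ι ι ℝ} (h : M ≤ N) (x : ι → E) :
    gramForm M x ≤ gramForm N x := by
  rw [← sub_nonneg, ← gramForm_sub]
  exact gramForm_nonneg (le_iff.mp h) x

theorem gramForm_transpose_mul_add_mul (A P : Matrix ι ι ℝ) (x : ι → E) :
    gramForm (Aᵀ * P + P * A) x =
      ∑ i, ∑ j, P i j * (⟪x i, ∑ k, A j k • x k⟫_ℝ + ⟪∑ k, A i k • x k, x j⟫_ℝ) := by
  have left : gramForm (Aᵀ * P) x = ∑ i, ∑ j, P i j * ⟪∑ k, A i k • x k, x j⟫_ℝ := by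
    simp only [gramForm, mul_apply, transpose_apply, sum_inner, real_inner_smul_left,
      Finset.sum_mul, Finset.mul_sum]
    rw [Finset.sum_comm_cycle]
    exact Finset.sum_congr rfl fun i _ => Finset.sum_comm.trans <|
      Finset.sum_congr rfl fun j _ => Finset.sum_congr rfl fun k _ => by ring
  have right : gramForm (P * A) x = ∑ i, ∑ j, P i j * ⟪x i, ∑ k, A j k • x k⟫_ℝ := by
    simp only [gramForm, mul_apply, inner_sum, real_inner_smul_right,
      Finset.sum_mul, Finset.mul_sum, mul_assoc]
    exact Finset.sum_congr rfl fun i _ => Finset.sum_comm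
  rw [gramForm_add, left, right, add_comm]
  simp only [mul_add, Finset.sum_add_distrib]

theorem hasDerivWithinAt_gramForm (P : Matrix ι ι ℝ) {x : ι → ℝ → E} {x' : ι → E} {s : Set ℝ}
    {t : ℝ} (hx : ∀ i, HasDerivWithinAt (x i) (x' i) s t) :
    HasDerivWithinAt (fun τ => gramForm P fun i => x i τ)
      (∑ i, ∑ j, P i j * (⟪x i t, x' j⟫_ℝ + ⟪x' i, x j t⟫_ℝ)) s t :=
  HasDerivWithinAt.fun_sum fun i _ => HasDerivWithinAt.fun_sum fun j _ =>
    ((hx i).inner ℝ (hx j)).const_mul (P i j)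

theorem le_mul_exp_of_hasDerivWithinAt_le {V V' : ℝ → ℝ} {a K : ℝ}
    (hV : ∀ t ∈ Ici a, HasDerivWithinAt V (V' t) (Ici a) t) (hV' : ∀ t ∈ Ici a, V' t ≤ K * V t)
    {t : ℝ} (ht : a ≤ t) : V t ≤ V a * Real.exp (K * (t - a)) := by
  rw [← gronwallBound_ε0]
  refine le_gronwallBound_of_liminf_deriv_right_le (f' := V') (b := t)
    (fun τ hτ => (hV τ hτ.1).continuousWithinAt.mono Icc_subset_Ici_self)
    (fun τ hτ r hr => ?_) le_rfl (fun τ hτ => by simpa using hV' τ hτ.1) t (right_mem_Icc.mpr ht)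
  exact ((hV τ hτ.1).mono (Ici_subset_Ici.mpr hτ.1)).liminf_right_slope_le hr

theorem sum_le_sqrt_mul_sum {a b : ι → ℝ} {K : ℝ} (hb : ∀ i, 0 ≤ b i) (hK : 0 ≤ K)
    (h : ∑ i, a i ^ 2 ≤ K * ∑ i, b i ^ 2) :
    ∑ i, a i ≤ √(Fintype.card ι * K) * ∑ i, b i := by
  refine le_of_sq_le_sq ?_ (mul_nonneg (Real.sqrt_nonneg _) (Finset.sum_nonneg fun i _ => hb i))
  calc (∑ i, a i) ^ 2
      ≤ Fintype.card ι * ∑ i, a i ^ 2 := sq_sum_le_card_mul_sum_sq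
    _ ≤ Fintype.card ι * (K * ∑ i, b i ^ 2) := by gcongr
    _ ≤ Fintype.card ι * (K * (∑ i, b i) ^ 2) := by
        gcongr
        exact Finset.sum_sq_le_sq_sum_of_nonneg fun i _ => hb i
    _ = (√(Fintype.card ι * K) * ∑ i, b i) ^ 2 := by
        rw [mul_pow, Real.sq_sqrt (by positivity), mul_assoc]

theorem tendsto_zero_of_norm_le_mul_exp_neg {F : Type*} [SeminormedAddCommGroup F] {f : ℝ → F}
    {C lam : ℝ} (hlam : 0 < lam) (hf : ∀ t ≥ 0, ‖f t‖ ≤ C * Real.exp (-lam * t)) :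
    Tendsto f atTop (𝓝 0) := by
  have hexp : Tendsto (fun t => C * Real.exp (-lam * t)) atTop (𝓝 (C * 0)) :=
    (Real.tendsto_exp_atBot.comp
      (tendsto_id.const_mul_atTop_of_neg (neg_lt_zero.mpr hlam))).const_mul C
  rw [mul_zero] at hexp
  exact squeeze_zero_norm' ((eventually_ge_atTop 0).mono hf) hexp

/-- `x` solves the linear system `ẋ = A x` on `[0, ∞)`, the matrix `A` acting on families of
vectors of `E`. The derivative at `0` is one-sided. -/
def IsForwardSolution (A : Matrix ι ι ℝ) (x : ι → ℝ → E) : Prop :=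
  ∀ i, ∀ t ≥ 0, HasDerivWithinAt (x i) (∑ j, A i j • x j t) (Ici 0) t

namespace IsForwardSolution

variable {A P : Matrix ι ι ℝ} {x : ι → ℝ → E}

theorem hasDerivWithinAt_lyapunov (hx : IsForwardSolution A x)
    (P : Matrix ι ι ℝ) {t : ℝ} (ht : 0 ≤ t) :
    HasDerivWithinAt (fun τ => gramForm P fun i => x i τ)
      (gramForm (Aᵀ * P + P * A) fun i => x i t) (Ici 0) t := by
  rw [gramForm_transpose_mul_add_mul]
  exact hasDerivWithinAt_gramForm P fun i => hx i t ht

theorem gramForm_le_mul_exp (hx : IsForwardSolution A x) {μ : ℝ}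
    (hμ : μ • P ≤ -(Aᵀ * P + P * A)) {t : ℝ} (ht : 0 ≤ t) :
    gramForm P (fun i => x i t) ≤ gramForm P (fun i => x i 0) * Real.exp (-μ * t) := by
  have hdecay : ∀ τ ∈ Ici (0 : ℝ), gramForm (Aᵀ * P + P * A) (fun i => x i τ) ≤
      -μ * gramForm P (fun i => x i τ) := fun τ _ => by
    have h := gramForm_mono hμ fun i => x i τ
    rw [gramForm_smul, gramForm_neg] at h
    linarith
  simpa only [sub_zero] using
    le_mul_exp_of_hasDerivWithinAt_le (fun τ hτ => hx.hasDerivWithinAt_lyapunov P hτ) hdecay ht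

theorem sum_norm_sq_le_mul_exp [DecidableEq ι] (hx : IsForwardSolution A x) {a b μ : ℝ}
    (ha : 0 < a) (haP : a • 1 ≤ P) (hb : 0 < b) (hPb : b • P ≤ 1)
    (hμ : μ • P ≤ -(Aᵀ * P + P * A)) {t : ℝ} (ht : 0 ≤ t) :
    ∑ i, ‖x i t‖ ^ 2 ≤ (a * b)⁻¹ * Real.exp (-μ * t) * ∑ i, ‖x i 0‖ ^ 2 := by
  have lower : a * ∑ i, ‖x i t‖ ^ 2 ≤ gramForm P fun i => x i t := by
    simpa only [gramForm_smul, gramForm_one] using gramForm_mono haP fun i => x i t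
  have upper : b * gramForm P (fun i => x i 0) ≤ ∑ i, ‖x i 0‖ ^ 2 := by
    simpa only [gramForm_smul, gramForm_one] using gramForm_mono hPb fun i => x i 0
  rw [mul_assoc, le_inv_mul_iff₀ (mul_pos ha hb)]
  calc a * b * ∑ i, ‖x i t‖ ^ 2
      = b * (a * ∑ i, ‖x i t‖ ^ 2) := by ring
    _ ≤ b * (gramForm P (fun i => x i 0) * Real.exp (-μ * t)) :=
        mul_le_mul_of_nonneg_left (lower.trans (hx.gramForm_le_mul_exp hμ ht)) hb.le
    _ = Real.exp (-μ * t) * (b * gramForm P fun i => x i 0) := by ring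
    _ ≤ Real.exp (-μ * t) * ∑ i, ‖x i 0‖ ^ 2 := by gcongr

theorem exists_sum_norm_le_mul_exp [Nonempty ι] (hP : P.PosDef)
    (hQ : (-(Aᵀ * P + P * A)).PosDef) :
    ∃ C > (0 : ℝ), ∃ lam > (0 : ℝ),
      ∀ {E : Type u} [NormedAddCommGroup E] [InnerProductSpace ℝ E] {x : ι → ℝ → E},
        IsForwardSolution A x → ∀ t ≥ (0 : ℝ),
          ∑ i, ‖x i t‖ ≤ C * (∑ i, ‖x i 0‖) * Real.exp (-lam * t) := by
  classical
  obtain ⟨a, ha, haP⟩ := exists_pos_smul_le_of_posDef isHermitian_one hP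
  obtain ⟨b, hb, hPb⟩ := exists_pos_smul_le_of_posDef hP.isHermitian (PosDef.one (R := ℝ))
  obtain ⟨μ, hμ, hPQ⟩ := exists_pos_smul_le_of_posDef hP.isHermitian hQ
  refine ⟨√(Fintype.card ι * (a * b)⁻¹), by positivity, μ / 2, by positivity, ?_⟩
  intro E _ _ x hx t ht
  calc ∑ i, ‖x i t‖
      ≤ √(Fintype.card ι * ((a * b)⁻¹ * Real.exp (-μ * t))) * ∑ i, ‖x i 0‖ :=
        sum_le_sqrt_mul_sum (fun i => norm_nonneg (x i 0)) (by positivity)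
          (hx.sum_norm_sq_le_mul_exp ha haP hb hPb hPQ ht)
    _ = √(Fintype.card ι * (a * b)⁻¹) * (∑ i, ‖x i 0‖) * Real.exp (-(μ / 2) * t) := by
        rw [← mul_assoc, Real.sqrt_mul (by positivity), ← Real.exp_half,
          show -μ * t / 2 = -(μ / 2) * t by ring, mul_right_comm]

end IsForwardSolution

/-- The matrix of the double integrator under PID feedback, for the state `(e, ė, z)`. -/
def pidMatrix (kP kD kI : ℝ) : Matrix (Fin 3) (Fin 3) ℝ :=
  !![0, 1, 0; -kP, -kD, -kI; 1, 0, 0]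

theorem neg_lyapunov_pidMatrix (kP kD kI α β γ σ : ℝ) :
    -((pidMatrix kP kD kI)ᵀ * !![kP, α, σ; α, 1, β; σ, β, γ] +
        !![kP, α, σ; α, 1, β; σ, β, γ] * pidMatrix kP kD kI) =
      !![2 * (kP * α - σ), kD * α - β, kI * α + kP * β - γ;
        kD * α - β, 2 * (kD - α), kI + β * kD - σ;
        kI * α + kP * β - γ, kI + β * kD - σ, 2 * β * kI] := by
  ext i j
  fin_cases i <;> fin_cases j <;> simp [pidMatrix, mul_apply, Fin.sum_univ_three] <;> ring

theorem isForwardSolution_pidMatrix {kP kD kI : ℝ} {e e' z : ℝ → E}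
    (he : ∀ t ≥ 0, HasDerivWithinAt e (e' t) (Ici 0) t)
    (he' : ∀ t ≥ 0, HasDerivWithinAt e' (-(kP • e t) - kD • e' t - kI • z t) (Ici 0) t)
    (hz : ∀ t ≥ 0, HasDerivWithinAt z (e t) (Ici 0) t) :
    IsForwardSolution (pidMatrix kP kD kI) ![e, e', z] := by
  intro i t ht
  fin_cases i
  · simpa [pidMatrix, Fin.sum_univ_three] using he t ht
  · simpa [pidMatrix, Fin.sum_univ_three, sub_eq_add_neg] using he' t ht
  · simpa [pidMatrix, Fin.sum_univ_three] using hz t ht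

end Lyapunov

theorem stmt_5_general (kP kD kI α β γ σ : ℝ)
    (hP : (!![kP, α, σ; α, 1, β; σ, β, γ] : Matrix (Fin 3) (Fin 3) ℝ).PosDef)
    (hQ : (!![2 * (kP * α - σ), kD * α - β, kI * α + kP * β - γ;
              kD * α - β, 2 * (kD - α), kI + β * kD - σ;
              kI * α + kP * β - γ, kI + β * kD - σ, 2 * β * kI] :
            Matrix (Fin 3) (Fin 3) ℝ).PosDef) :
    ∃ C > (0 : ℝ), ∃ lam > (0 : ℝ),
      ∀ {E : Type u} [NormedAddCommGroup E] [InnerProductSpace ℝ E] (e e' z : ℝ → E),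
        (∀ t ≥ 0, HasDerivWithinAt e (e' t) (Set.Ici 0) t) →
        (∀ t ≥ 0, HasDerivWithinAt e' (-(kP • e t) - kD • e' t - kI • z t) (Set.Ici 0) t) →
        (∀ t ≥ 0, HasDerivWithinAt z (e t) (Set.Ici 0) t) →
        (∀ t ≥ (0 : ℝ),
            ‖e t‖ + ‖e' t‖ + ‖z t‖ ≤
              C * (‖e 0‖ + ‖e' 0‖ + ‖z 0‖) * Real.exp (-lam * t)) ∧
          Filter.Tendsto e Filter.atTop (nhds 0) ∧
          Filter.Tendsto e' Filter.atTop (nhds 0) ∧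
          Filter.Tendsto z Filter.atTop (nhds 0) := by
  rw [← neg_lyapunov_pidMatrix] at hQ
  obtain ⟨C, hC, lam, hlam, decay⟩ := IsForwardSolution.exists_sum_norm_le_mul_exp.{u} hP hQ
  refine ⟨C, hC, lam, hlam, fun e e' z he he' hz => ?_⟩
  have hx := isForwardSolution_pidMatrix he he' hz
  have component (i : Fin 3) : Filter.Tendsto (![e, e', z] i) Filter.atTop (nhds 0) :=
    tendsto_zero_of_norm_le_mul_exp_neg hlam fun t ht =>
      (Finset.single_le_sum (fun j _ => norm_nonneg (![e, e', z] j t)) (Finset.mem_univ i)).trans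
        (decay hx t ht)
  exact ⟨by simpa [Fin.sum_univ_three] using decay hx, component 0, component 1, component 2⟩

theorem stmt_5 (n : ℕ) (hn : 1 ≤ n) (kP kD kI α β γ σ : ℝ)
    (hP : (!![kP, α, σ; α, 1, β; σ, β, γ] : Matrix (Fin 3) (Fin 3) ℝ).PosDef)
    (hQ : (!![2 * (kP * α - σ), kD * α - β, kI * α + kP * β - γ;
              kD * α - β, 2 * (kD - α), kI + β * kD - σ;
              kI * α + kP * β - γ, kI + β * kD - σ, 2 * β * kI] :
            Matrix (Fin 3) (Fin 3) ℝ).PosDef) :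
    ∃ C > (0 : ℝ), ∃ lam > (0 : ℝ),
      ∀ e e' z : ℝ → EuclideanSpace ℝ (Fin n),
        (∀ t, HasDerivAt e (e' t) t) →
        (∀ t, HasDerivAt e' (-(kP • e t) - kD • e' t - kI • z t) t) →
        (∀ t, HasDerivAt z (e t) t) →
        (∀ t ≥ (0 : ℝ),
            ‖e t‖ + ‖e' t‖ + ‖z t‖ ≤
              C * (‖e 0‖ + ‖e' 0‖ + ‖z 0‖) * Real.exp (-lam * t)) ∧
          Filter.Tendsto e Filter.atTop (nhds 0) ∧
          Filter.Tendsto e' Filter.atTop (nhds 0) ∧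
          Filter.Tendsto z Filter.atTop (nhds 0) := by
  obtain ⟨C, hC, lam, hlam, h⟩ := stmt_5_general kP kD kI α β γ σ hP hQ
  exact ⟨C, hC, lam, hlam, fun e e' z he he' hz =>
    h e e' z (fun t _ => (he t).hasDerivWithinAt) (fun t _ => (he' t).hasDerivWithinAt)
      fun t _ => (hz t).hasDerivWithinAt⟩
end

section
/- Let E be a real Banach space, let Q : ℝ → (E →L[ℝ] E) be continuously differentiable with Q(t) ∘ Q(t) = Q(t) for all t, let u : ℝ → E be continuous with Q(t)(u(t)) = 0 for all t, and let w : ℝ → E be differentiable and satisfy w'(t) = u(t) − Q'(t)(w(t)) for all t. If Q(0)(w(0)) = 0, then Q(t)(w(t)) = 0 for all t ≥ 0. -/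
/-!
Differentiating `Q² = Q` gives `Q' = Q' Q + Q Q'`. Together with `Q u = 0`, this makes the
correction term `-Q' w` turn the equation for `w` into the homogeneous linear equation `y' = Q' y`
for the constraint residual `y = Q w`, so `y` vanishes identically as soon as it vanishes once.
-/

open Filter Set Topology

section Derivative

variable {𝕜 : Type*} [NontriviallyNormedField 𝕜]

theorem eq_mul_add_mul_of_hasDerivAt_of_isIdempotentElem {𝔸 : Type*} [NormedRing 𝔸]
    [NormedAlgebra 𝕜 𝔸] {p : 𝕜 → 𝔸} {p' : 𝔸} {t : 𝕜} (hp : HasDerivAt p p' t)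
    (hidem : ∀ᶠ s in 𝓝 t, IsIdempotentElem (p s)) :
    p' = p' * p t + p t * p' := by
  have hmul : p =ᶠ[𝓝 t] p * p := hidem.mono fun _ hs => hs.eq.symm
  exact hp.unique ((hp.mul hp).congr_of_eventuallyEq hmul)

theorem hasDerivAt_clm_apply_of_isIdempotentElem {E : Type*} [NormedAddCommGroup E]
    [NormedSpace 𝕜 E] {Q : 𝕜 → E →L[𝕜] E} {Q' : E →L[𝕜] E} {w : 𝕜 → E} {v : E} {t : 𝕜}
    (hQ : HasDerivAt Q Q' t) (hidem : ∀ᶠ s in 𝓝 t, IsIdempotentElem (Q s))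
    (hw : HasDerivAt w (v - Q' (w t)) t) (hv : Q t v = 0) :
    HasDerivAt (fun s => Q s (w s)) (Q' (Q t (w t))) t := by
  have hleibniz : Q' (w t) = Q' (Q t (w t)) + Q t (Q' (w t)) :=
    DFunLike.congr_fun (eq_mul_add_mul_of_hasDerivAt_of_isIdempotentElem hQ hidem) (w t)
  have hderiv : Q' (w t) + Q t (v - Q' (w t)) = Q' (Q t (w t)) := by
    rw [map_sub, hv, zero_sub, ← sub_eq_add_neg, sub_eq_iff_eq_add]
    exact hleibniz
  exact hderiv ▸ hQ.clm_apply hw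

end Derivative

section LinearODE

variable {E : Type*} [NormedAddCommGroup E] [NormedSpace ℝ E] {A : ℝ → E →L[ℝ] E} {y : ℝ → E}
  {t₀ : ℝ}

theorem eqOn_zero_Icc_of_hasDerivAt_clm_apply {a b : ℝ} (hA : ContinuousOn A (Icc a b))
    (ht₀ : t₀ ∈ Ioo a b) (hy : ContinuousOn y (Icc a b))
    (hy' : ∀ t ∈ Ioo a b, HasDerivAt y (A t (y t)) t) (h₀ : y t₀ = 0) :
    EqOn y 0 (Icc a b) := by
  obtain ⟨K, hK⟩ := isCompact_Icc.exists_bound_of_continuousOn hA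
  have hlip : ∀ t ∈ Ioo a b, LipschitzOnWith K.toNNReal (A t) univ := fun t ht =>
    ((A t).lipschitz.weaken
      (NNReal.le_toNNReal_of_coe_le (hK t (Ioo_subset_Icc_self ht)))).lipschitzOnWith
  have hzero : ∀ t ∈ Ioo a b, HasDerivAt (0 : ℝ → E) (A t 0) t := fun t _ => by
    rw [map_zero]
    exact hasDerivAt_const t 0
  exact ODE_solution_unique_of_mem_Icc hlip ht₀ hy hy' (fun _ _ => mem_univ _)
    continuousOn_const hzero (fun _ _ => mem_univ _) h₀

theorem eq_zero_of_hasDerivAt_clm_apply (hA : Continuous A)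
    (hy : ∀ t, HasDerivAt y (A t (y t)) t) (h₀ : y t₀ = 0) : y = 0 := by
  ext t
  have ht₀ : t₀ ∈ Ioo (min t₀ t - 1) (max t₀ t + 1) := by
    constructor <;> linarith [min_le_left t₀ t, le_max_left t₀ t]
  have ht : t ∈ Icc (min t₀ t - 1) (max t₀ t + 1) := by
    constructor <;> linarith [min_le_right t₀ t, le_max_right t₀ t]
  exact eqOn_zero_Icc_of_hasDerivAt_clm_apply hA.continuousOn ht₀
    (HasDerivAt.continuousOn fun s _ => hy s) (fun s _ => hy s) h₀ ht

end LinearODE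

theorem stmt_10_general {E : Type*} [NormedAddCommGroup E] [NormedSpace ℝ E]
    {Q Q' : ℝ → E →L[ℝ] E} (hQ : ∀ t, HasDerivAt Q (Q' t) t) (hQ' : Continuous Q')
    (hidem : ∀ t, IsIdempotentElem (Q t)) {u : ℝ → E} (huD : ∀ t, Q t (u t) = 0)
    {w : ℝ → E} (hw : ∀ t, HasDerivAt w (u t - Q' t (w t)) t) {t₀ : ℝ} (h₀ : Q t₀ (w t₀) = 0)
    (t : ℝ) : Q t (w t) = 0 := by
  have hderiv : ∀ s, HasDerivAt (fun r => Q r (w r)) (Q' s (Q s (w s))) s := fun s =>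
    hasDerivAt_clm_apply_of_isIdempotentElem (hQ s) (Eventually.of_forall hidem) (hw s) (huD s)
  exact congrFun (eq_zero_of_hasDerivAt_clm_apply hQ' hderiv h₀) t

theorem stmt_10 {E : Type*} [NormedAddCommGroup E] [NormedSpace ℝ E] [CompleteSpace E]
    (Q Q' : ℝ → (E →L[ℝ] E))
    (hQ : ∀ t, HasDerivAt Q (Q' t) t) (hQ' : Continuous Q')
    (hidem : ∀ t, (Q t).comp (Q t) = Q t)
    (u : ℝ → E) (hu : Continuous u) (huD : ∀ t, Q t (u t) = 0)
    (w : ℝ → E) (hw : ∀ t, HasDerivAt w (u t - Q' t (w t)) t)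
    (h0 : Q 0 (w 0) = 0) :
    ∀ t ≥ (0 : ℝ), Q t (w t) = 0 :=
  fun t _ => stmt_10_general hQ hQ' hidem huD hw h0 t
end
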